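/- (Corollary 2, part 2: missingness-adjusted inverse probability weighting.) Fix d = (d1,d2) in {(1,1),(0,1),(1,0)} and d' = (0,0), with P(D = d) > 0. Suppose Assumption DID holds for d and for d', Assumption MAR holds, P(D = d | X) > 0 and P(D = d' | X) > 0 a.s., and all displayed expectations are finite. Write q_{D2}(X) for the random variable equal to q_{d2}(X) on {D2 = d2}, d2 in {0,1}. Then E[p_d(X)]^{-1} · E[(S/q_{D2}(X)) · (1{D = d} − (p_d(X)/p_{d'}(X)) · 1{D = d'}) · ΔY] = τ_{dd'}. -/

import Mathlib

open MeasureTheory Set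
open scoped Classical

noncomputable section

namespace DIDMissing

variable {Ω : Type*} {𝓧 : Type*}

/-- Real-valued indicator of a set. -/
def ind (A : Set Ω) : Ω → ℝ := A.indicator fun _ => (1 : ℝ)

/-- All treatment paths `{0,1}²` (coded as reals). -/
def allPaths : Set (ℝ × ℝ) := {(0, 0), (0, 1), (1, 0), (1, 1)}

/-- The three treated paths `{(1,1), (0,1), (1,0)}`. -/
def threePaths : Set (ℝ × ℝ) := {(1, 1), (0, 1), (1, 0)}

/-- The event `{D = d}` for a treatment path `d = (d₁, d₂)`. -/
def evD (D1 D2 : Ω → ℝ) (d : ℝ × ℝ) : Set Ω := {ω | D1 ω = d.1 ∧ D2 ω = d.2}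

/-- The event `{D₂ = b}`. -/
def evD2 (D2 : Ω → ℝ) (b : ℝ) : Set Ω := {ω | D2 ω = b}

/-- `g` is a (measurable-in-the-covariate) version of the conditional mean `E[Z ∣ A, X]`:
for every bounded measurable `h`, `E[1_A · Z · h(X)] = E[1_A · g(X) · h(X)]`. -/
def IsCondMeanGiven [MeasurableSpace Ω] [MeasurableSpace 𝓧] (P : Measure Ω) (X : Ω → 𝓧)
    (A : Set Ω) (Z : Ω → ℝ) (g : 𝓧 → ℝ) : Prop :=
  Measurable g ∧
    ∀ h : 𝓧 → ℝ, Measurable h → (∃ C, ∀ x, |h x| ≤ C) →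
      ∫ ω, ind A ω * Z ω * h (X ω) ∂P = ∫ ω, ind A ω * g (X ω) * h (X ω) ∂P

/-- Assumption DID for a path `d` relative to `d' = (0,0)`:
(i) no anticipation, `E[Y₀(d) ∣ D = d, X] = E[Y₀(0,0) ∣ D = d, X]` a.s., stated in the
version-free integral form; and (ii) conditional parallel trends, stated as the existence
of a common version of `E[Y₂(0,0) − Y₀(0,0) ∣ X]` and `E[Y₂(0,0) − Y₀(0,0) ∣ D = d, X]`. -/
def DID [MeasurableSpace Ω] [MeasurableSpace 𝓧] (P : Measure Ω) (X : Ω → 𝓧)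
    (D1 D2 : Ω → ℝ) (Y0p Y2p : ℝ × ℝ → Ω → ℝ) (d : ℝ × ℝ) : Prop :=
  (∀ h : 𝓧 → ℝ, Measurable h → (∃ C, ∀ x, |h x| ≤ C) →
      ∫ ω, ind (evD D1 D2 d) ω * Y0p d ω * h (X ω) ∂P
        = ∫ ω, ind (evD D1 D2 d) ω * Y0p (0, 0) ω * h (X ω) ∂P) ∧
  (∃ tr : 𝓧 → ℝ,
      IsCondMeanGiven P X Set.univ (fun ω => Y2p (0, 0) ω - Y0p (0, 0) ω) tr ∧
      IsCondMeanGiven P X (evD D1 D2 d) (fun ω => Y2p (0, 0) ω - Y0p (0, 0) ω) tr)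

/-- Assumption MAR: `S ⟂ (D₁, ΔY) ∣ (D₂, X)`, where `q d₂` is a version of the
missing-data probability `P(S = 1 ∣ D₂ = d₂, X)`, which is `(0,1]`-valued a.s. -/
def MAR [MeasurableSpace Ω] [MeasurableSpace 𝓧] (P : Measure Ω) (X : Ω → 𝓧)
    (D1 D2 S Y0 Y2 : Ω → ℝ) (q : ℝ → 𝓧 → ℝ) : Prop :=
  (∀ d2 ∈ ({0, 1} : Set ℝ), IsCondMeanGiven P X (evD2 D2 d2) S (q d2)) ∧
  (∀ d2 ∈ ({0, 1} : Set ℝ), ∀ᵐ ω ∂P, 0 < q d2 (X ω) ∧ q d2 (X ω) ≤ 1) ∧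
  (∀ d2 ∈ ({0, 1} : Set ℝ), ∀ f : ℝ × ℝ → ℝ, Measurable f → (∃ C, ∀ p, |f p| ≤ C) →
      ∀ h : 𝓧 → ℝ, Measurable h → (∃ C, ∀ x, |h x| ≤ C) →
        ∫ ω, ind (evD2 D2 d2) ω * S ω * f (D1 ω, Y2 ω - Y0 ω) * h (X ω) ∂P
          = ∫ ω, ind (evD2 D2 d2) ω * q d2 (X ω) * f (D1 ω, Y2 ω - Y0 ω) * h (X ω) ∂P)

/-- The path-dependent ATT `τ_{d,(0,0)} = E[Y₂(d) − Y₂(0,0) ∣ D = d]`. -/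
def tau [MeasurableSpace Ω] (P : Measure Ω) (D1 D2 : Ω → ℝ)
    (Y2p : ℝ × ℝ → Ω → ℝ) (d : ℝ × ℝ) : ℝ :=
  (P (evD D1 D2 d)).toReal⁻¹ * ∫ ω in evD D1 D2 d, (Y2p d ω - Y2p (0, 0) ω) ∂P

/-! For a path `d`, MAR says that `S` has conditional mean `q_{d₂}(X)` on `{D = d}` given `(ΔY, X)`,
not only given `X`. Weighting by `S / q_{D₂}(X)` therefore does not change the mean of any function
of `(ΔY, X)` on `{D = d}`, and what remains is ordinary inverse probability weighting. There,
`Z = Y₂(0,0) - Y₀(0,0)` has the same conditional mean `g(X)` on `{D = d}` and on `{D = (0,0)}`, so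
`E[(p_d/p_{d'})(X) 1{D = (0,0)} Z] = E[p_d(X) g(X)] = E[1{D = d} Z]`: reweighting the comparison
group produces the trend that the group `d` would have had without treatment.
-/

section ConditionalExpectation

variable {m m₀ : MeasurableSpace Ω} {μ : Measure Ω} [IsFiniteMeasure μ]

lemma ae_eq_condExp_of_forall_setIntegral_eq_of_stronglyMeasurable {E : Type*}
    [NormedAddCommGroup E] [NormedSpace ℝ E] [CompleteSpace E] (hm : m ≤ m₀) {f g : Ω → E}
    (hf : Integrable f μ) (hg : StronglyMeasurable[m] g)
    (hfg : ∀ s, MeasurableSet[m] s → ∫ ω in s, g ω ∂μ = ∫ ω in s, f ω ∂μ) :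
    g =ᵐ[μ] μ[f | m] := by
  -- `g` is not known to be integrable yet, but its restrictions to the sets `{‖g‖ ≤ n}` are.
  have agree_on_sublevel (n : ℕ) : ∀ᵐ ω ∂μ, ‖g ω‖ ≤ n → g ω = (μ[f | m]) ω := by
    let B : Set Ω := {ω | ‖g ω‖ ≤ n}
    have hB : MeasurableSet[m] B := hg.norm.measurable measurableSet_Iic
    have hgB : Integrable (B.indicator g) μ := by
      refine .of_bound ((hg.indicator hB).mono hm).aestronglyMeasurable n (.of_forall fun ω => ?_)
      by_cases hω : ω ∈ B
      · rw [indicator_of_mem hω]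
        exact hω
      · simp [hω]
    have hBg : B.indicator g =ᵐ[μ] μ[B.indicator f | m] := by
      refine ae_eq_condExp_of_forall_setIntegral_eq hm (hf.indicator (hm _ hB))
        (fun _ _ _ => hgB.integrableOn) (fun s hs _ => ?_)
        (hg.indicator hB).aestronglyMeasurable
      rw [setIntegral_indicator (hm _ hB), setIntegral_indicator (hm _ hB), hfg _ (hs.inter hB)]
    filter_upwards [hBg, condExp_indicator hf hB] with ω h₁ h₂ hω
    have hωB : ω ∈ B := hω
    simpa only [indicator_of_mem hωB] using h₁.trans h₂
  filter_upwards [ae_all_iff.2 agree_on_sublevel] with ω hω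
  obtain ⟨n, hn⟩ := exists_nat_ge ‖g ω‖
  exact hω n hn

lemma integrable_mul_and_integral_mul_eq_of_ae_eq_condExp (hm : m ≤ m₀) {f g z : Ω → ℝ}
    (hz : Integrable z μ) (hg : g =ᵐ[μ] μ[z | m]) (hf : StronglyMeasurable[m] f)
    (hfz : Integrable (fun ω => f ω * z ω) μ) :
    Integrable (fun ω => f ω * g ω) μ ∧ ∫ ω, f ω * z ω ∂μ = ∫ ω, f ω * g ω ∂μ := by
  have pull_out : μ[fun ω => f ω * z ω | m] =ᵐ[μ] fun ω => f ω * g ω := by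
    filter_upwards [condExp_mul_of_stronglyMeasurable_left hf hfz hz, hg] with ω h₁ h₂
    rw [h₂]
    exact h₁
  exact ⟨integrable_condExp.congr pull_out,
    (integral_condExp hm).symm.trans (integral_congr_ae pull_out)⟩

end ConditionalExpectation

lemma setIntegral_preimage_prodMk_eq {α β E : Type*} [MeasurableSpace Ω] [MeasurableSpace α]
    [MeasurableSpace β] [NormedAddCommGroup E] [NormedSpace ℝ E] {μ : Measure Ω} {V : Ω → α}
    {X : Ω → β} (hV : Measurable V) (hX : Measurable X) {f g : Ω → E}
    (hf : Integrable f μ) (hg : Integrable g μ)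
    (hfg : ∀ s t, MeasurableSet s → MeasurableSet t →
      ∫ ω in V ⁻¹' s ∩ X ⁻¹' t, f ω ∂μ = ∫ ω in V ⁻¹' s ∩ X ⁻¹' t, g ω ∂μ)
    {u : Set (α × β)} (hu : MeasurableSet u) :
    ∫ ω in (fun ω => (V ω, X ω)) ⁻¹' u, f ω ∂μ = ∫ ω in (fun ω => (V ω, X ω)) ⁻¹' u, g ω ∂μ := by
  let T : Ω → α × β := fun ω => (V ω, X ω)
  have hT : Measurable T := hV.prodMk hX
  have map_apply {k : Ω → E} (hk : Integrable k μ) {v : Set (α × β)} (hv : MeasurableSet v) :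
      (μ.withDensityᵥ k).map T v = ∫ ω in T ⁻¹' v, k ω ∂μ := by
    rw [VectorMeasure.map_apply _ hT hv, withDensityᵥ_apply hk (hT hv)]
  have hmap : (μ.withDensityᵥ f).map T = (μ.withDensityᵥ g).map T := by
    refine VectorMeasure.ext_of_generateFrom _ ?_ generateFrom_prod.symm isPiSystem_prod ?_
    · rintro _ ⟨s, hs, t, ht, rfl⟩
      rw [map_apply hf (hs.prod ht), map_apply hg (hs.prod ht)]
      exact hfg s t hs ht
    · rw [map_apply hf .univ, map_apply hg .univ]
      simpa using hfg univ univ .univ .univ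
  rw [← map_apply hf hu, ← map_apply hg hu, hmap]

section Indicator

lemma ind_mul_eq_indicator (A : Set Ω) (f : Ω → ℝ) (ω : Ω) :
    ind A ω * f ω = A.indicator f ω := by
  by_cases h : ω ∈ A <;> simp [ind, h]

lemma abs_ind_le_one (A : Set Ω) (ω : Ω) : |ind A ω| ≤ 1 := by
  by_cases h : ω ∈ A <;> simp [ind, h]

variable [MeasurableSpace Ω] {P : Measure Ω} {A B : Set Ω}

lemma measurable_ind (hA : MeasurableSet A) : Measurable (ind A) :=
  measurable_const.indicator hA

lemma integral_ind_mul (hA : MeasurableSet A) (f : Ω → ℝ) :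
    ∫ ω, ind A ω * f ω ∂P = ∫ ω in A, f ω ∂P := by
  simp only [ind_mul_eq_indicator, integral_indicator hA]

lemma integrable_ind_mul_iff (hA : MeasurableSet A) {f : Ω → ℝ} :
    Integrable (fun ω => ind A ω * f ω) P ↔ IntegrableOn f A P := by
  simp only [ind_mul_eq_indicator, integrable_indicator_iff hA]

lemma integral_ind_mul_mul_ind (hA : MeasurableSet A) (hB : MeasurableSet B) (f : Ω → ℝ) :
    ∫ ω, ind A ω * f ω * ind B ω ∂P = ∫ ω in B, f ω ∂P.restrict A := by
  simp only [mul_assoc, integral_ind_mul hA, mul_comm (f _), integral_ind_mul hB]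

lemma integrable_of_forall_eq_zero_or_one [IsFiniteMeasure P] {S : Ω → ℝ} (hS : Measurable S)
    (hSv : ∀ ω, S ω = 0 ∨ S ω = 1) : Integrable S P :=
  .of_bound hS.aestronglyMeasurable 1 (.of_forall fun ω => by rcases hSv ω with h | h <;> simp [h])

lemma integral_mul_ind_sub_mul_ind (hA : MeasurableSet A) (hB : MeasurableSet B)
    (hAB : Disjoint A B) {k w y : Ω → ℝ}
    (hi : Integrable (fun ω => k ω * (ind A ω - w ω * ind B ω) * y ω) P) :
    IntegrableOn (fun ω => k ω * y ω) A P ∧ IntegrableOn (fun ω => k ω * (w ω * y ω)) B P ∧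
      ∫ ω, k ω * (ind A ω - w ω * ind B ω) * y ω ∂P
        = ∫ ω in A, k ω * y ω ∂P - ∫ ω in B, k ω * (w ω * y ω) ∂P := by
  have hiA : IntegrableOn (fun ω => k ω * y ω) A P :=
    hi.integrableOn.congr_fun (fun ω hω => by simp [ind, hω, disjoint_left.1 hAB hω]) hA
  have hiB : IntegrableOn (fun ω => k ω * (w ω * y ω)) B P :=
    hi.neg.integrableOn.congr_fun
      (fun ω hω => by simp [ind, hω, disjoint_right.1 hAB hω, mul_assoc]) hB
  refine ⟨hiA, hiB, ?_⟩
  rw [← integral_ind_mul hA, ← integral_ind_mul hB, ← integral_sub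
    ((integrable_ind_mul_iff hA).2 hiA) ((integrable_ind_mul_iff hB).2 hiB)]
  exact integral_congr_ae (.of_forall fun ω => by ring)

end Indicator

section ConditionalMean

variable [MeasurableSpace Ω] [m𝓧 : MeasurableSpace 𝓧] {P : Measure Ω} [IsFiniteMeasure P]
  {X : Ω → 𝓧} {A B : Set Ω} {Z : Ω → ℝ} {g g' p pA pB : 𝓧 → ℝ}

lemma IsCondMeanGiven.ae_eq_condExp (hg : IsCondMeanGiven P X A Z g) (hX : Measurable X)
    (hA : MeasurableSet A) (hZ : IntegrableOn Z A P) :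
    (fun ω => g (X ω)) =ᵐ[P.restrict A] (P.restrict A)[Z | m𝓧.comap X] := by
  refine ae_eq_condExp_of_forall_setIntegral_eq_of_stronglyMeasurable hX.comap_le hZ
    (hg.1.comp (comap_measurable X)).stronglyMeasurable ?_
  rintro _ ⟨t, ht, rfl⟩
  rw [← integral_ind_mul_mul_ind hA (hX ht), ← integral_ind_mul_mul_ind hA (hX ht)]
  exact (hg.2 (ind t) (measurable_ind ht) ⟨1, abs_ind_le_one t⟩).symm

lemma IsCondMeanGiven.integrableOn_and_setIntegral_mul_eq (hg : IsCondMeanGiven P X A Z g)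
    (hX : Measurable X) (hA : MeasurableSet A) (hZ : IntegrableOn Z A P) {h : 𝓧 → ℝ}
    (hh : Measurable h) (hhZ : IntegrableOn (fun ω => h (X ω) * Z ω) A P) :
    IntegrableOn (fun ω => h (X ω) * g (X ω)) A P ∧
      ∫ ω in A, h (X ω) * Z ω ∂P = ∫ ω in A, h (X ω) * g (X ω) ∂P :=
  integrable_mul_and_integral_mul_eq_of_ae_eq_condExp hX.comap_le hZ
    (hg.ae_eq_condExp hX hA hZ) (hh.comp (comap_measurable X)).stronglyMeasurable hhZ

lemma IsCondMeanGiven.ae_eq_of_univ (hg : IsCondMeanGiven P X univ Z g)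
    (hg' : IsCondMeanGiven P X univ Z g') (hX : Measurable X) (hZ : Integrable Z P) :
    ∀ᵐ ω ∂P, g (X ω) = g' (X ω) := by
  rw [← Measure.restrict_univ (μ := P)]
  exact (hg.ae_eq_condExp hX .univ hZ.integrableOn).trans
    (hg'.ae_eq_condExp hX .univ hZ.integrableOn).symm

lemma IsCondMeanGiven.setIntegral_eq_integral_mul_propensity
    (hp : IsCondMeanGiven P X univ (ind A) p) (hX : Measurable X) (hA : MeasurableSet A)
    {h : 𝓧 → ℝ} (hh : Measurable h) (hhA : IntegrableOn (fun ω => h (X ω)) A P) :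
    ∫ ω in A, h (X ω) ∂P = ∫ ω, h (X ω) * p (X ω) ∂P := by
  have hAi : Integrable (ind A) P := (integrable_const 1).indicator hA
  have hhA' : Integrable (fun ω => h (X ω) * ind A ω) P := by
    simpa only [mul_comm] using (integrable_ind_mul_iff hA).2 hhA
  have key := (hp.integrableOn_and_setIntegral_mul_eq hX .univ hAi.integrableOn hh
    hhA'.integrableOn).2
  rw [setIntegral_univ, setIntegral_univ] at key
  rw [← key, ← integral_ind_mul hA]
  simp only [mul_comm]

lemma IsCondMeanGiven.integral_propensity_eq_measureReal (hp : IsCondMeanGiven P X univ (ind A) p)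
    (hX : Measurable X) (hA : MeasurableSet A) : ∫ ω, p (X ω) ∂P = P.real A := by
  simpa using (hp.setIntegral_eq_integral_mul_propensity hX hA measurable_const
    (integrable_const (1 : ℝ)).integrableOn).symm

theorem setIntegral_propensity_div_mul_eq (hX : Measurable X) (hA : MeasurableSet A)
    (hB : MeasurableSet B) (hpA : IsCondMeanGiven P X univ (ind A) pA)
    (hpB : IsCondMeanGiven P X univ (ind B) pB) (hpB₀ : ∀ᵐ ω ∂P, pB (X ω) ≠ 0)
    (hgA : IsCondMeanGiven P X A Z g) (hgB : IsCondMeanGiven P X B Z g')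
    (hgg' : ∀ᵐ ω ∂P, g (X ω) = g' (X ω)) (hZA : IntegrableOn Z A P) (hZB : IntegrableOn Z B P)
    (hwZ : IntegrableOn (fun ω => pA (X ω) / pB (X ω) * Z ω) B P) :
    ∫ ω in B, pA (X ω) / pB (X ω) * Z ω ∂P = ∫ ω in A, Z ω ∂P := by
  have hw : Measurable fun x => pA x / pB x := hpA.1.div hpB.1
  obtain ⟨hwgB, hwZ_eq⟩ := hgB.integrableOn_and_setIntegral_mul_eq hX hB hZB hw hwZ
  obtain ⟨hgAi, hZ_eq⟩ := hgA.integrableOn_and_setIntegral_mul_eq hX hA hZA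
    (h := fun _ => 1) measurable_const (by simpa using hZA)
  simp only [one_mul] at hgAi hZ_eq
  calc ∫ ω in B, pA (X ω) / pB (X ω) * Z ω ∂P
    _ = ∫ ω in B, pA (X ω) / pB (X ω) * g' (X ω) ∂P := hwZ_eq
    _ = ∫ ω, pA (X ω) / pB (X ω) * g' (X ω) * pB (X ω) ∂P :=
      hpB.setIntegral_eq_integral_mul_propensity hX hB (hw.mul hgB.1) hwgB
    _ = ∫ ω, g (X ω) * pA (X ω) ∂P := by
      refine integral_congr_ae ?_
      filter_upwards [hpB₀, hgg'] with ω hω hgω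
      rw [hgω]
      field_simp
    _ = ∫ ω in A, g (X ω) ∂P := (hpA.setIntegral_eq_integral_mul_propensity hX hA hgA.1 hgAi).symm
    _ = ∫ ω in A, Z ω ∂P := hZ_eq.symm

end ConditionalMean

section TreatmentPaths

lemma pair_subset_allPaths_of_mem_threePaths {d : ℝ × ℝ} (hd : d ∈ threePaths) :
    {d, (0, 0)} ⊆ allPaths := by
  rcases hd with rfl | rfl | rfl <;> simp [allPaths, insert_subset_iff]

lemma ne_zero_of_mem_threePaths {d : ℝ × ℝ} (hd : d ∈ threePaths) : d ≠ (0, 0) := by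
  rcases hd with rfl | rfl | rfl <;> simp

lemma snd_mem_of_mem_threePaths {d : ℝ × ℝ} (hd : d ∈ threePaths) :
    d.2 ∈ ({0, 1} : Set ℝ) := by
  rcases hd with rfl | rfl | rfl <;> simp

lemma disjoint_evD (D1 D2 : Ω → ℝ) {d e : ℝ × ℝ} (hde : d ≠ e) :
    Disjoint (evD D1 D2 d) (evD D1 D2 e) :=
  disjoint_left.2 fun _ hd he => hde (Prod.ext (hd.1.symm.trans he.1) (hd.2.symm.trans he.2))

lemma eq_potential_of_mem_evD {D1 D2 Y : Ω → ℝ} {Yp : ℝ × ℝ → Ω → ℝ}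
    (hcons : ∀ ω, Y ω = Yp (D1 ω, D2 ω) ω) {d : ℝ × ℝ} {ω : Ω} (hω : ω ∈ evD D1 D2 d) :
    Y ω = Yp d ω := by
  rw [hcons, hω.1, hω.2]

lemma measurableSet_evD [MeasurableSpace Ω] {D1 D2 : Ω → ℝ} (hD1 : Measurable D1)
    (hD2 : Measurable D2) (d : ℝ × ℝ) : MeasurableSet (evD D1 D2 d) :=
  (hD1 (measurableSet_singleton d.1)).inter (hD2 (measurableSet_singleton d.2))

end TreatmentPaths

section DifferenceInDifferences

variable [MeasurableSpace Ω] [MeasurableSpace 𝓧] {P : Measure Ω} {X : Ω → 𝓧} {Y0 Y2 D1 D2 : Ω → ℝ}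
  {Y0p Y2p : ℝ × ℝ → Ω → ℝ} {d : ℝ × ℝ} {pd pd' : 𝓧 → ℝ}

lemma DID.setIntegral_anticipation (hDID : DID P X D1 D2 Y0p Y2p d)
    (hA : MeasurableSet (evD D1 D2 d)) :
    ∫ ω in evD D1 D2 d, Y0p d ω ∂P = ∫ ω in evD D1 D2 d, Y0p (0, 0) ω ∂P := by
  simpa only [mul_one, integral_ind_mul hA] using
    hDID.1 (fun _ => 1) measurable_const ⟨1, fun _ => by simp⟩

lemma DID.setIntegral_outcome_sub_trend (hDID : DID P X D1 D2 Y0p Y2p d)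
    (hA : MeasurableSet (evD D1 D2 d))
    (hY0 : ∀ e ∈ ({d, (0, 0)} : Set (ℝ × ℝ)), Integrable (Y0p e) P)
    (hY2 : ∀ e ∈ ({d, (0, 0)} : Set (ℝ × ℝ)), Integrable (Y2p e) P) :
    ∫ ω in evD D1 D2 d, (Y2p d ω - Y0p d ω) ∂P
        - ∫ ω in evD D1 D2 d, (Y2p (0, 0) ω - Y0p (0, 0) ω) ∂P
      = ∫ ω in evD D1 D2 d, (Y2p d ω - Y2p (0, 0) ω) ∂P := by
  have hY0d := (hY0 d (by simp)).integrableOn (s := evD D1 D2 d)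
  have hY00 := (hY0 (0, 0) (by simp)).integrableOn (s := evD D1 D2 d)
  have hY2d := (hY2 d (by simp)).integrableOn (s := evD D1 D2 d)
  have hY20 := (hY2 (0, 0) (by simp)).integrableOn (s := evD D1 D2 d)
  rw [integral_sub hY2d hY0d, integral_sub hY20 hY00, integral_sub hY2d hY20,
    hDID.setIntegral_anticipation hA]
  ring

theorem DID.setIntegral_sub_setIntegral_propensity_div_mul [IsFiniteMeasure P]
    (hDIDd : DID P X D1 D2 Y0p Y2p d) (hDIDd' : DID P X D1 D2 Y0p Y2p (0, 0))
    (hX : Measurable X) (hD1 : Measurable D1) (hD2 : Measurable D2)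
    (hY0p : ∀ e ∈ ({d, (0, 0)} : Set (ℝ × ℝ)), Integrable (Y0p e) P)
    (hY2p : ∀ e ∈ ({d, (0, 0)} : Set (ℝ × ℝ)), Integrable (Y2p e) P)
    (hcons0 : ∀ ω, Y0 ω = Y0p (D1 ω, D2 ω) ω) (hcons2 : ∀ ω, Y2 ω = Y2p (D1 ω, D2 ω) ω)
    (hpd : IsCondMeanGiven P X univ (ind (evD D1 D2 d)) pd)
    (hpd' : IsCondMeanGiven P X univ (ind (evD D1 D2 (0, 0))) pd')
    (hpd'₀ : ∀ᵐ ω ∂P, pd' (X ω) ≠ 0)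
    (hi : IntegrableOn (fun ω => pd (X ω) / pd' (X ω) * (Y2 ω - Y0 ω)) (evD D1 D2 (0, 0)) P) :
    ∫ ω in evD D1 D2 d, (Y2 ω - Y0 ω) ∂P
        - ∫ ω in evD D1 D2 (0, 0), pd (X ω) / pd' (X ω) * (Y2 ω - Y0 ω) ∂P
      = ∫ ω in evD D1 D2 d, (Y2p d ω - Y2p (0, 0) ω) ∂P := by
  have hA := measurableSet_evD hD1 hD2
  have change_eq (e : ℝ × ℝ) : ∀ ω ∈ evD D1 D2 e, Y2 ω - Y0 ω = Y2p e ω - Y0p e ω :=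
    fun ω hω => by rw [eq_potential_of_mem_evD hcons0 hω, eq_potential_of_mem_evD hcons2 hω]
  have weighted_eq : EqOn (fun ω => pd (X ω) / pd' (X ω) * (Y2 ω - Y0 ω))
      (fun ω => pd (X ω) / pd' (X ω) * (Y2p (0, 0) ω - Y0p (0, 0) ω)) (evD D1 D2 (0, 0)) :=
    fun ω hω => congrArg _ (change_eq (0, 0) ω hω)
  have trend_integrable : Integrable (fun ω => Y2p (0, 0) ω - Y0p (0, 0) ω) P :=
    (hY2p (0, 0) (by simp)).sub (hY0p (0, 0) (by simp))
  obtain ⟨tr, htr, htrd⟩ := hDIDd.2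
  obtain ⟨tr', htr', htrd'⟩ := hDIDd'.2
  have comparison_eq := setIntegral_propensity_div_mul_eq hX (hA d) (hA (0, 0)) hpd hpd' hpd'₀
    htrd htrd' (htr.ae_eq_of_univ htr' hX trend_integrable) trend_integrable.integrableOn
    trend_integrable.integrableOn (hi.congr_fun weighted_eq (hA (0, 0)))
  rw [setIntegral_congr_fun (hA d) (change_eq d), setIntegral_congr_fun (hA (0, 0)) weighted_eq,
    comparison_eq, hDIDd.setIntegral_outcome_sub_trend (hA d) hY0p hY2p]

end DifferenceInDifferences

section MissingAtRandom

variable [MeasurableSpace Ω] [MeasurableSpace 𝓧] {P : Measure Ω} [IsFiniteMeasure P] {X : Ω → 𝓧}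
  {Y0 Y2 D1 D2 S : Ω → ℝ} {q : ℝ → 𝓧 → ℝ} {d : ℝ × ℝ}

lemma MAR.integrable_comp (hMAR : MAR P X D1 D2 S Y0 Y2 q) (hX : Measurable X) {d2 : ℝ}
    (hd2 : d2 ∈ ({0, 1} : Set ℝ)) : Integrable (fun ω => q d2 (X ω)) P := by
  refine .of_bound ((hMAR.1 d2 hd2).1.comp hX).aestronglyMeasurable 1 ?_
  filter_upwards [hMAR.2.1 d2 hd2] with ω hω
  rw [Real.norm_of_nonneg hω.1.le]
  exact hω.2

lemma MAR.ae_eq_condExp (hMAR : MAR P X D1 D2 S Y0 Y2 q) (hX : Measurable X)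
    (hY0 : Measurable Y0) (hY2 : Measurable Y2) (hD1 : Measurable D1) (hD2 : Measurable D2)
    (hS : Integrable S P) (hd2 : d.2 ∈ ({0, 1} : Set ℝ)) :
    (fun ω => q d.2 (X ω)) =ᵐ[P.restrict (evD D1 D2 d)]
      (P.restrict (evD D1 D2 d))[S | .comap (fun ω => (Y2 ω - Y0 ω, X ω)) inferInstance] := by
  have hA := measurableSet_evD hD1 hD2 d
  have hΔ : Measurable fun ω => Y2 ω - Y0 ω := hY2.sub hY0
  have hq := (hMAR.integrable_comp hX hd2).restrict (s := evD D1 D2 d)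
  refine ae_eq_condExp_of_forall_setIntegral_eq_of_stronglyMeasurable (hΔ.prodMk hX).comap_le
    hS.restrict ((hMAR.1 d.2 hd2).1.comp
      (measurable_snd.comp (comap_measurable _))).stronglyMeasurable ?_
  rintro _ ⟨u, hu, rfl⟩
  refine setIntegral_preimage_prodMk_eq hΔ hX hq hS.restrict (fun s t hs ht => ?_) hu
  have hst : MeasurableSet ((fun ω => Y2 ω - Y0 ω) ⁻¹' s ∩ X ⁻¹' t) := (hΔ hs).inter (hX ht)
  -- The test function `1_{{d₁} × s}` of `(D₁, ΔY)` cuts `{D₂ = d₂}` down to `{D = d}`.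
  have test_eq (Z : Ω → ℝ) :
      ∫ ω, ind (evD2 D2 d.2) ω * Z ω * ind ({d.1} ×ˢ s) (D1 ω, Y2 ω - Y0 ω) * ind t (X ω) ∂P
        = ∫ ω in (fun ω => Y2 ω - Y0 ω) ⁻¹' s ∩ X ⁻¹' t, Z ω ∂P.restrict (evD D1 D2 d) := by
    rw [← integral_ind_mul_mul_ind hA hst]
    refine integral_congr_ae (.of_forall fun ω => ?_)
    by_cases h₁ : D1 ω = d.1 <;> by_cases h₂ : D2 ω = d.2 <;>
      by_cases hs : Y2 ω - Y0 ω ∈ s <;> by_cases ht : X ω ∈ t <;>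
      simp [ind, evD, evD2, h₁, h₂, hs, ht]
  rw [← test_eq, ← test_eq]
  exact (hMAR.2.2 d.2 hd2 _ (measurable_ind ((measurableSet_singleton d.1).prod hs))
    ⟨1, abs_ind_le_one _⟩ _ (measurable_ind ht) ⟨1, abs_ind_le_one t⟩).symm

theorem MAR.integrableOn_and_setIntegral_div_mul_eq (hMAR : MAR P X D1 D2 S Y0 Y2 q)
    (hX : Measurable X) (hY0 : Measurable Y0) (hY2 : Measurable Y2) (hD1 : Measurable D1)
    (hD2 : Measurable D2) (hS : Integrable S P) (hd2 : d.2 ∈ ({0, 1} : Set ℝ))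
    {F : ℝ × 𝓧 → ℝ} (hF : Measurable F)
    (hi : IntegrableOn (fun ω => S ω / q (D2 ω) (X ω) * F (Y2 ω - Y0 ω, X ω))
      (evD D1 D2 d) P) :
    IntegrableOn (fun ω => F (Y2 ω - Y0 ω, X ω)) (evD D1 D2 d) P ∧
      ∫ ω in evD D1 D2 d, S ω / q (D2 ω) (X ω) * F (Y2 ω - Y0 ω, X ω) ∂P
        = ∫ ω in evD D1 D2 d, F (Y2 ω - Y0 ω, X ω) ∂P := by
  have hA := measurableSet_evD hD1 hD2 d
  have hΔX : Measurable fun ω => (Y2 ω - Y0 ω, X ω) := (hY2.sub hY0).prodMk hX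
  have hG : Measurable fun z : ℝ × 𝓧 => F z / q d.2 z.2 :=
    hF.div ((hMAR.1 d.2 hd2).1.comp measurable_snd)
  have weight_eq : EqOn (fun ω => S ω / q (D2 ω) (X ω) * F (Y2 ω - Y0 ω, X ω))
      (fun ω => F (Y2 ω - Y0 ω, X ω) / q d.2 (X ω) * S ω) (evD D1 D2 d) := fun ω hω => by
    simp only [show D2 ω = d.2 from hω.2]
    ring
  have cancel : (fun ω => F (Y2 ω - Y0 ω, X ω) / q d.2 (X ω) * q d.2 (X ω))
      =ᵐ[P.restrict (evD D1 D2 d)] fun ω => F (Y2 ω - Y0 ω, X ω) := by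
    filter_upwards [ae_restrict_of_ae (hMAR.2.1 d.2 hd2)] with ω hω
    exact div_mul_cancel₀ _ hω.1.ne'
  obtain ⟨hi', h_eq⟩ := integrable_mul_and_integral_mul_eq_of_ae_eq_condExp hΔX.comap_le
    hS.restrict (hMAR.ae_eq_condExp hX hY0 hY2 hD1 hD2 hS hd2)
    (hG.comp (comap_measurable _)).stronglyMeasurable (hi.congr_fun weight_eq hA)
  refine ⟨hi'.congr cancel, ?_⟩
  rw [setIntegral_congr_fun hA weight_eq, ← integral_congr_ae cancel]
  exact h_eq

end MissingAtRandom

theorem statement_9_general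
    [MeasurableSpace Ω] [MeasurableSpace 𝓧] (P : Measure Ω) [IsFiniteMeasure P]
    (X : Ω → 𝓧) (hX : Measurable X)
    (Y0 Y2 D1 D2 S : Ω → ℝ)
    (hY0 : Measurable Y0) (hY2 : Measurable Y2)
    (hD1 : Measurable D1) (hD2 : Measurable D2) (hS : Integrable S P)
    (Y0p Y2p : ℝ × ℝ → Ω → ℝ) (d : ℝ × ℝ) (hd : d ≠ (0, 0)) (hd2 : d.2 ∈ ({0, 1} : Set ℝ))
    (hY0p : ∀ e ∈ ({d, (0, 0)} : Set (ℝ × ℝ)), Integrable (Y0p e) P)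
    (hY2p : ∀ e ∈ ({d, (0, 0)} : Set (ℝ × ℝ)), Integrable (Y2p e) P)
    (hcons0 : ∀ ω, Y0 ω = Y0p (D1 ω, D2 ω) ω)
    (hcons2 : ∀ ω, Y2 ω = Y2p (D1 ω, D2 ω) ω)
    (hPd : 0 < P (evD D1 D2 d))
    (hDIDd : DID P X D1 D2 Y0p Y2p d) (hDIDd' : DID P X D1 D2 Y0p Y2p (0, 0))
    (q : ℝ → 𝓧 → ℝ) (hMAR : MAR P X D1 D2 S Y0 Y2 q)
    (pd pd' : 𝓧 → ℝ)
    (hpd : IsCondMeanGiven P X univ (ind (evD D1 D2 d)) pd)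
    (hpd' : IsCondMeanGiven P X univ (ind (evD D1 D2 (0, 0))) pd')
    (hpd'₀ : ∀ᵐ ω ∂P, pd' (X ω) ≠ 0)
    (hfin : Integrable (fun ω =>
        S ω / q (D2 ω) (X ω)
          * (ind (evD D1 D2 d) ω - pd (X ω) / pd' (X ω) * ind (evD D1 D2 (0, 0)) ω)
          * (Y2 ω - Y0 ω)) P) :
    (∫ ω, pd (X ω) ∂P)⁻¹
        * ∫ ω, S ω / q (D2 ω) (X ω)
            * (ind (evD D1 D2 d) ω - pd (X ω) / pd' (X ω) * ind (evD D1 D2 (0, 0)) ω)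
            * (Y2 ω - Y0 ω) ∂P
      = tau P D1 D2 Y2p d := by
  have hA := measurableSet_evD hD1 hD2
  have hw : Measurable fun x => pd x / pd' x := hpd.1.div hpd'.1
  obtain ⟨treated_int, comparison_int, split_eq⟩ :=
    integral_mul_ind_sub_mul_ind (hA d) (hA (0, 0)) (disjoint_evD D1 D2 hd) hfin
  have treated_eq := (hMAR.integrableOn_and_setIntegral_div_mul_eq hX hY0 hY2 hD1 hD2 hS hd2
    measurable_fst treated_int).2
  obtain ⟨comparison_int', comparison_eq⟩ := hMAR.integrableOn_and_setIntegral_div_mul_eq hX hY0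
    hY2 hD1 hD2 hS (by simp) ((hw.comp measurable_snd).mul measurable_fst) comparison_int
  have hPd₀ : P.real (evD D1 D2 d) ≠ 0 := (ENNReal.toReal_pos hPd.ne' (measure_ne_top _ _)).ne'
  rw [split_eq, treated_eq, hpd.integral_propensity_eq_measureReal hX (hA d),
    inv_mul_eq_iff_eq_mul₀ hPd₀, tau, ← measureReal_def, mul_inv_cancel_left₀ hPd₀]
  exact (congrArg _ comparison_eq).trans
    (hDIDd.setIntegral_sub_setIntegral_propensity_div_mul hDIDd' hX hD1 hD2 hY0p hY2p hcons0
      hcons2 hpd hpd' hpd'₀ comparison_int')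

/-- Corollary 2, part 2: missingness-adjusted inverse probability weighting identifies
the PDATT. -/
theorem statement_9
    [MeasurableSpace Ω] [m𝓧 : MeasurableSpace 𝓧]
    (P : Measure Ω) [IsProbabilityMeasure P]
    (X : Ω → 𝓧) (hX : Measurable X)
    (Y0 Y2 D1 D2 S : Ω → ℝ)
    (hY0 : Measurable Y0) (hY2 : Measurable Y2)
    (hD1 : Measurable D1) (hD2 : Measurable D2) (hS : Measurable S)
    (hY0i : Integrable Y0 P) (hY2i : Integrable Y2 P)
    (hD1v : ∀ ω, D1 ω = 0 ∨ D1 ω = 1) (hD2v : ∀ ω, D2 ω = 0 ∨ D2 ω = 1)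
    (hSv : ∀ ω, S ω = 0 ∨ S ω = 1)
    (Y0p Y2p : ℝ × ℝ → Ω → ℝ)
    (hY0p : ∀ e ∈ allPaths, Measurable (Y0p e) ∧ Integrable (Y0p e) P)
    (hY2p : ∀ e ∈ allPaths, Measurable (Y2p e) ∧ Integrable (Y2p e) P)
    (hcons0 : ∀ ω, Y0 ω = Y0p (D1 ω, D2 ω) ω)
    (hcons2 : ∀ ω, Y2 ω = Y2p (D1 ω, D2 ω) ω)
    (d : ℝ × ℝ) (hd : d ∈ threePaths) (hPd : 0 < P (evD D1 D2 d))
    (hDIDd : DID P X D1 D2 Y0p Y2p d) (hDIDd' : DID P X D1 D2 Y0p Y2p (0, 0))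
    (q : ℝ → 𝓧 → ℝ) (hMAR : MAR P X D1 D2 S Y0 Y2 q)
    (pd pd' : 𝓧 → ℝ)
    (hpd : IsCondMeanGiven P X Set.univ (ind (evD D1 D2 d)) pd)
    (hpd' : IsCondMeanGiven P X Set.univ (ind (evD D1 D2 (0, 0))) pd')
    (hpdpos : ∀ᵐ ω ∂P, 0 < pd (X ω)) (hpd'pos : ∀ᵐ ω ∂P, 0 < pd' (X ω))
    (hpdi : Integrable (fun ω => pd (X ω)) P)
    (hfin : Integrable (fun ω =>
        S ω / q (D2 ω) (X ω)
          * (ind (evD D1 D2 d) ω - pd (X ω) / pd' (X ω) * ind (evD D1 D2 (0, 0)) ω)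
          * (Y2 ω - Y0 ω)) P) :
    (∫ ω, pd (X ω) ∂P)⁻¹
        * ∫ ω, S ω / q (D2 ω) (X ω)
            * (ind (evD D1 D2 d) ω - pd (X ω) / pd' (X ω) * ind (evD D1 D2 (0, 0)) ω)
            * (Y2 ω - Y0 ω) ∂P
      = tau P D1 D2 Y2p d := by
  exact statement_9_general P X hX Y0 Y2 D1 D2 S hY0 hY2 hD1 hD2
    (integrable_of_forall_eq_zero_or_one hS hSv)
    Y0p Y2p d (ne_zero_of_mem_threePaths hd) (snd_mem_of_mem_threePaths hd)
    (fun e he => (hY0p e (pair_subset_allPaths_of_mem_threePaths hd he)).2)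
    (fun e he => (hY2p e (pair_subset_allPaths_of_mem_threePaths hd he)).2) hcons0 hcons2 hPd
    hDIDd hDIDd' q hMAR pd pd' hpd hpd' (hpd'pos.mono fun _ h => h.ne') hfin

end DIDMissing
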